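/- Any two words (finite lists of positive integers) that are permutations of each other — i.e. one is a rearrangement of the multiset of letters of the other — are cyclic Knuth equivalent. -/

import Mathlib

namespace CycKnuth

/-- Generators of cyclic Knuth equivalence on words (lists of positive
integers): the two elementary Knuth transformations
`yzx → yxz` (for `x < y ≤ z`) and `xzy → zxy` (for `x ≤ y < z`), and the
rotation moving the last letter to the front.  (The generated equivalence
relation automatically contains the inverse transformations.) -/
inductive KnuthStep : List ℕ+ → List ℕ+ → Prop
  | K1 (a b : List ℕ+) (x y z : ℕ+) (h₁ : x < y) (h₂ : y ≤ z) :
      KnuthStep (a ++ [y, z, x] ++ b) (a ++ [y, x, z] ++ b)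
  | K2 (a b : List ℕ+) (x y z : ℕ+) (h₁ : x ≤ y) (h₂ : y < z) :
      KnuthStep (a ++ [x, z, y] ++ b) (a ++ [z, x, y] ++ b)
  | rot (w : List ℕ+) (x : ℕ+) :
      KnuthStep (w ++ [x]) (x :: w)

/-- Cyclic Knuth equivalence: the equivalence relation generated by the
elementary Knuth transformations and rotations. -/
def CyclicKnuthEquiv (v w : List ℕ+) : Prop := Relation.EqvGen KnuthStep v w

end CycKnuth

open CycKnuth

/-!
Start from a word `v ++ r` whose suffix `r` is a weakly increasing row: rotate the first
letter `x` of `v` to the end and row-insert it into `r`. Either `x` extends the row and `v` gets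
shorter, or `x` replaces a larger letter `y`, which Knuth moves carry to the front of the row, where
it joins the end of `v`; then `v` keeps its length but the sum of the row drops. The process
terminates in a sorted word, so every word is equivalent to its sorted rearrangement.
-/

namespace CycKnuth

section LinearOrder

variable {α : Type*} [LinearOrder α] {x y : α} {r r₁ r₂ : List α}

theorem sortedLE_concat_or_exists_bump (x : α) (hr : r.SortedLE) :
    (r ++ [x]).SortedLE ∨
      ∃ r₁ y r₂, r = r₁ ++ y :: r₂ ∧ x < y ∧ (r₁ ++ x :: r₂).SortedLE := by
  cases hfind : r.find? (x < ·) with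
  | none => grind
  | some y =>
    obtain ⟨hxy, r₁, r₂, rfl, hr₁⟩ := List.find?_eq_some_iff_append.mp hfind
    replace hxy : x < y := of_decide_eq_true hxy
    replace hr₁ : ∀ a ∈ r₁, a ≤ x := by simpa using hr₁
    refine .inr ⟨r₁, y, r₂, rfl, hxy, ?_⟩
    simp only [List.sortedLE_iff_pairwise, List.pairwise_append, List.pairwise_cons,
      List.forall_mem_cons] at hr ⊢
    obtain ⟨hsorted₁, ⟨hy, hsorted₂⟩, hcross⟩ := hr
    exact ⟨hsorted₁, ⟨fun b hb => hxy.le.trans (hy b hb), hsorted₂⟩,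
      fun a ha => ⟨hr₁ a ha, (hcross a ha).2⟩⟩

/-- Knuth (plactic) equivalence of words over a linearly ordered alphabet: the congruence for
concatenation generated by the two elementary Knuth transformations. Unlike `CyclicKnuthEquiv`
it does not allow rotations, so it can be applied inside a longer word. -/
inductive KnuthEquiv : List α → List α → Prop
  | yzx {x y z : α} (hxy : x < y) (hyz : y ≤ z) : KnuthEquiv [y, z, x] [y, x, z]
  | xzy {x y z : α} (hxy : x ≤ y) (hyz : y < z) : KnuthEquiv [x, z, y] [z, x, y]
  | refl (s : List α) : KnuthEquiv s s
  | symm {s t : List α} : KnuthEquiv s t → KnuthEquiv t s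
  | trans {s t u : List α} : KnuthEquiv s t → KnuthEquiv t u → KnuthEquiv s u
  | append {s s' t t' : List α} :
      KnuthEquiv s s' → KnuthEquiv t t' → KnuthEquiv (s ++ t) (s' ++ t')

namespace KnuthEquiv

instance : IsTrans (List α) KnuthEquiv := ⟨fun _ _ _ => trans⟩

theorem append_left {s t : List α} (a : List α) (h : KnuthEquiv s t) :
    KnuthEquiv (a ++ s) (a ++ t) :=
  (refl a).append h

theorem append_right {s t : List α} (b : List α) (h : KnuthEquiv s t) :
    KnuthEquiv (s ++ b) (t ++ b) :=
  h.append (refl b)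

theorem cons_concat_of_lt (hxy : x < y) (hr : (y :: r).SortedLE) :
    KnuthEquiv (y :: r ++ [x]) (y :: x :: r) := by
  induction r generalizing y with
  | nil => exact refl _
  | cons z r ih =>
    have hyz : y ≤ z := by grind
    calc
      KnuthEquiv ([y] ++ (z :: r ++ [x])) ([y] ++ z :: x :: r) :=
        (ih (hxy.trans_le hyz) (by grind)).append_left [y]
      KnuthEquiv ([y, z, x] ++ r) ([y, x, z] ++ r) := (yzx hxy hyz).append_right r

theorem append_pair_of_lt (hxy : x < y) (hr : (r ++ [x]).SortedLE) :
    KnuthEquiv (r ++ [y, x]) (y :: r ++ [x]) := by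
  induction r using List.reverseRecOn generalizing x with
  | nil => exact refl _
  | append_singleton r q ih =>
    have hqx : q ≤ x := by grind
    calc
      r ++ [q] ++ [y, x] = r ++ [q, y, x] := by simp
      KnuthEquiv _ (r ++ [y, q, x]) := (xzy hqx hxy).append_left r
      _ = r ++ [y, q] ++ [x] := by simp
      KnuthEquiv _ (y :: r ++ [q] ++ [x]) :=
        (ih (hqx.trans_lt hxy) (by grind)).append_right [x]

theorem row_bump (hxy : x < y) (hr : (r₁ ++ y :: r₂).SortedLE)
    (hr' : (r₁ ++ x :: r₂).SortedLE) :
    KnuthEquiv (r₁ ++ y :: r₂ ++ [x]) (y :: (r₁ ++ x :: r₂)) :=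
  calc
    r₁ ++ y :: r₂ ++ [x] = r₁ ++ (y :: r₂ ++ [x]) := List.append_assoc ..
    KnuthEquiv _ (r₁ ++ y :: x :: r₂) := (cons_concat_of_lt hxy (by grind)).append_left r₁
    _ = r₁ ++ [y, x] ++ r₂ := by simp
    KnuthEquiv _ (y :: r₁ ++ [x] ++ r₂) := (append_pair_of_lt hxy (by grind)).append_right r₂
    _ = y :: (r₁ ++ x :: r₂) := by simp

end KnuthEquiv

end LinearOrder

instance : IsEquiv (List ℕ+) CyclicKnuthEquiv :=
  inferInstanceAs (IsEquiv (List ℕ+) (Relation.EqvGen KnuthStep))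

theorem KnuthStep.perm {v w : List ℕ+} (h : KnuthStep v w) : v.Perm w := by
  cases h with
  | K1 a b x y z => exact (((List.Perm.swap x z []).cons y).append_left a).append_right b
  | K2 a b x y z => exact ((List.Perm.swap z x [y]).append_left a).append_right b
  | rot w x => exact List.perm_append_singleton x w

theorem CyclicKnuthEquiv.perm {v w : List ℕ+} (h : CyclicKnuthEquiv v w) : v.Perm w :=
  (List.Perm.eqv ℕ+).eqvGen_iff.mp (h.mono fun _ _ => KnuthStep.perm)

theorem cyclicKnuthEquiv_cons_concat (x : ℕ+) (w : List ℕ+) :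
    CyclicKnuthEquiv (x :: w) (w ++ [x]) :=
  symm (Relation.EqvGen.rel _ _ (KnuthStep.rot w x) : CyclicKnuthEquiv _ _)

theorem KnuthEquiv.cyclicKnuthEquiv_append {s t : List ℕ+} (h : KnuthEquiv s t)
    (a b : List ℕ+) : CyclicKnuthEquiv (a ++ s ++ b) (a ++ t ++ b) := by
  induction h generalizing a b with
  | yzx hxy hyz => exact .rel _ _ (.K1 a b _ _ _ hxy hyz)
  | xzy hxy hyz => exact .rel _ _ (.K2 a b _ _ _ hxy hyz)
  | refl s => exact .refl _
  | symm _ ih => exact .symm _ _ (ih a b)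
  | trans _ _ ihst ihtu => exact .trans _ _ _ (ihst a b) (ihtu a b)
  | @append s s' t t' _ _ ihs iht =>
    calc
      a ++ (s ++ t) ++ b = a ++ s ++ (t ++ b) := by simp
      CyclicKnuthEquiv _ (a ++ s' ++ (t ++ b)) := ihs a (t ++ b)
      _ = a ++ s' ++ t ++ b := by simp
      CyclicKnuthEquiv _ (a ++ s' ++ t' ++ b) := iht (a ++ s') b
      _ = a ++ (s' ++ t') ++ b := by simp

theorem exists_sortedLE_cyclicKnuthEquiv_append (v r : List ℕ+) (hr : r.SortedLE) :
    ∃ s : List ℕ+, s.SortedLE ∧ CyclicKnuthEquiv (v ++ r) s := by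
  match v with
  | [] => exact ⟨r, hr, refl r⟩
  | x :: v =>
    have hrot : CyclicKnuthEquiv (x :: v ++ r) (v ++ (r ++ [x])) := by
      simpa using cyclicKnuthEquiv_cons_concat x (v ++ r)
    rcases sortedLE_concat_or_exists_bump x hr with hrx | ⟨r₁, y, r₂, hsplit, hxy, hr'⟩
    · obtain ⟨s, hs, hvs⟩ := exists_sortedLE_cyclicKnuthEquiv_append v (r ++ [x]) hrx
      exact ⟨s, hs, _root_.trans hrot hvs⟩
    · have hbump : CyclicKnuthEquiv (v ++ (r ++ [x])) (v ++ [y] ++ (r₁ ++ x :: r₂)) := by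
        subst hsplit
        simpa using (KnuthEquiv.row_bump hxy hr hr').cyclicKnuthEquiv_append v []
      obtain ⟨s, hs, hvs⟩ := exists_sortedLE_cyclicKnuthEquiv_append (v ++ [y]) _ hr'
      exact ⟨s, hs, _root_.trans hrot (_root_.trans hbump hvs)⟩
termination_by (v.length, (r.map PNat.val).sum)
decreasing_by
  · exact Prod.Lex.left _ _ (by simp)
  · have hval : x.val < y.val := hxy
    simp [Prod.lex_def, hsplit, hval]

theorem cyclicKnuthEquiv_insertionSort (w : List ℕ+) :
    CyclicKnuthEquiv w (w.insertionSort (· ≤ ·)) := by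
  obtain ⟨s, hs, hws⟩ := exists_sortedLE_cyclicKnuthEquiv_append w [] List.Pairwise.nil.sortedLE
  rw [List.append_nil] at hws
  have hperm : s.Perm (w.insertionSort (· ≤ ·)) :=
    hws.perm.symm.trans (List.perm_insertionSort _ w).symm
  exact hperm.eq_of_sortedLE hs List.sortedLE_insertionSort ▸ hws

end CycKnuth

/-- any two words that are permutations of each other are
cyclic Knuth equivalent. -/
theorem stmt19 (w v : List ℕ+) (h : w.Perm v) : CyclicKnuthEquiv w v := by
  have hsort : w.insertionSort (· ≤ ·) = v.insertionSort (· ≤ ·) :=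
    List.Perm.eq_of_sortedLE List.sortedLE_insertionSort List.sortedLE_insertionSort
      (((List.perm_insertionSort _ w).trans h).trans (List.perm_insertionSort _ v).symm)
  calc
    CyclicKnuthEquiv w (w.insertionSort (· ≤ ·)) := cyclicKnuthEquiv_insertionSort w
    _ = v.insertionSort (· ≤ ·) := hsort
    CyclicKnuthEquiv _ v := symm (cyclicKnuthEquiv_insertionSort v)
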